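/- arXiv:1903.11939 — 2 statements merged into one kernel-verified Lean document; each statement's English description precedes it below -/
import Mathlib

section
/- Let 0 < α < 1, t > 0 and x > 0. Then a_k(x,t) → 0 as k → +∞. -/
open Real MeasureTheory

/-- The Mittag-Leffler function `E_α(r) = ∑ r^k / Γ(1+kα)`. -/
noncomputable def mittagLeffler (α r : ℝ) : ℝ :=
  ∑' k : ℕ, r ^ k / Real.Gamma (1 + k * α)

/-- The coefficients `a_k(x,t)` obtained by splitting the Fourier integral of the
fundamental solution over the intervals where `cos (xξ)` has a fixed sign. -/
noncomputable def aCoeff (α t x : ℝ) (k : ℕ) : ℝ :=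
  if k = 0 then
    ∫ ξ in (0 : ℝ)..(π / (2 * x)),
      mittagLeffler α ((1 - ξ ^ 2) * t ^ α) * Real.cos (x * ξ)
  else
    (-1 : ℝ) ^ k *
      ∫ ξ in (π * (2 * (k : ℝ) - 1) / (2 * x))..(π * (2 * (k : ℝ) + 1) / (2 * x)),
        mittagLeffler α ((1 - ξ ^ 2) * t ^ α) * Real.cos (x * ξ)


/-!
For `0 < α ≤ 1`, `u_β(t) = t ^ (β - 1) * E_{α,β}(-t ^ α)` is the alternating series
`∑ (-1) ^ k g_{β+kα}(t)` of the kernels `g_p(t) = t ^ (p - 1) / Γ(p)`. Since `g_p ∗ g_q = g_{p+q}`,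
it satisfies `u_β ∗ g_γ = u_{β+γ}`, and splitting off the first term gives
`u_β = g_β - u_{β+α}`. In particular `u_α` is the resolvent of `g_α`, which is positive because
`g_α` is log-convex. Hence `u_β > 0` for all `β ≥ α`, and `u_1 = 1 - u_α ∗ 1` is decreasing, so
`u_1(T) * g_{1+α}(T) ≤ (u_1 ∗ g_α)(T) = 1 - u_1(T)`. This is the bound
`0 < E_α(-r) ≤ 1 / (1 + r / Γ(1+α))`, and the integrals `a_k`, taken over intervals of constant
length moving to infinity, inherit the decay of `E_α` at `-∞`.
-/

open Filter Set Topology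

theorem exists_first_nonpos {f : ℝ → ℝ} {a t : ℝ} (hf : ContinuousOn f (Ioi a))
    (hpos : ∀ᶠ s in 𝓝[>] a, 0 < f s) (hat : a < t) (hft : f t ≤ 0) :
    ∃ T, a < T ∧ f T ≤ 0 ∧ ∀ s ∈ Ioo a T, 0 < f s := by
  obtain ⟨b, hab, hb⟩ := mem_nhdsGT_iff_exists_Ioo_subset.1 hpos
  have hbt : b ≤ t := not_lt.1 fun h => hft.not_gt (hb ⟨hat, h⟩)
  have hcompact : IsCompact (Icc b t ∩ f ⁻¹' Iic 0) := by
    have hsub : Icc b t ⊆ Ioi a := fun s hs => lt_of_lt_of_le hab hs.1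
    exact isCompact_Icc.of_isClosed_subset
      ((hf.mono hsub).preimage_isClosed_of_isClosed isClosed_Icc isClosed_Iic) inter_subset_left
  obtain ⟨T, ⟨hT, hfT⟩, hleast⟩ := hcompact.exists_isLeast ⟨t, ⟨hbt, le_rfl⟩, hft⟩
  refine ⟨T, lt_of_lt_of_le hab hT.1, hfT, fun s hs => ?_⟩
  by_contra! hfs
  have hbs : b ≤ s := not_lt.1 fun h => hfs.not_gt (hb ⟨hs.1, h⟩)
  exact hs.2.not_ge (hleast ⟨⟨hbs, hs.2.le.trans hT.2⟩, hfs⟩)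

theorem add_le_add_of_convexOn {s : Set ℝ} {f : ℝ → ℝ} (hf : ConvexOn ℝ s f)
    {w x y z : ℝ} (hw : w ∈ s) (hz : z ∈ s) (hwx : w ≤ x) (hxz : x ≤ z) (hsum : x + y = w + z) :
    f x + f y ≤ f w + f z := by
  obtain ⟨a, b, ha, hb, hab, rfl⟩ := (Convex.mem_Icc (hwx.trans hxz)).1 ⟨hwx, hxz⟩
  have hy : y = b * w + a * z := by linear_combination hsum - (w + z) * hab
  have h₁ := hf.2 hw hz ha hb hab
  have h₂ := hf.2 hw hz hb ha ((add_comm b a).trans hab)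
  simp only [smul_eq_mul] at h₁ h₂
  rw [hy]
  linear_combination h₁ + h₂ + (f w + f z) * hab

theorem mul_le_mul_of_convexOn_log {s : Set ℝ} {k : ℝ → ℝ} (hpos : ∀ x ∈ s, 0 < k x)
    (hk : ConvexOn ℝ s fun x => log (k x)) {w x y z : ℝ} (hw : w ∈ s) (hz : z ∈ s)
    (hwx : w ≤ x) (hxz : x ≤ z) (hsum : x + y = w + z) : k x * k y ≤ k w * k z := by
  have hx : x ∈ s := hk.1.ordConnected.out hw hz ⟨hwx, hxz⟩
  have hy : y ∈ s := hk.1.ordConnected.out hw hz ⟨by linarith, by linarith⟩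
  have hlog := add_le_add_of_convexOn hk hw hz hwx hxz hsum
  rw [← log_mul (hpos x hx).ne' (hpos y hy).ne', ← log_mul (hpos w hw).ne' (hpos z hz).ne'] at hlog
  exact (log_le_log_iff (mul_pos (hpos x hx) (hpos y hy)) (mul_pos (hpos w hw) (hpos z hz))).1 hlog

theorem intervalIntegrable_comp_sub_self {k : ℝ → ℝ} {T : ℝ}
    (hk : IntervalIntegrable k volume 0 T) :
    IntervalIntegrable (fun s => k (T - s)) volume 0 T := by
  simpa only [sub_self, sub_zero] using (hk.comp_sub_left T).symm

theorem eventually_mul_integral_comp_sub_lt {k : ℝ → ℝ} {T : ℝ} (hT : 0 < T) (hk_pos : 0 < k T)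
    (hk_cont : ContinuousAt k T) (hk_int : IntervalIntegrable k volume 0 T) :
    ∀ᶠ U in 𝓝[<] T, k U * ∫ s in U..T, k (T - s) < k T := by
  have hint : IntegrableOn (fun s => k (T - s)) (uIcc 0 T) := by
    rw [uIcc_of_le hT.le, ← intervalIntegrable_iff_integrableOn_Icc_of_le hT.le]
    exact intervalIntegrable_comp_sub_self hk_int
  have hprim : Tendsto (fun U => ∫ s in U..T, k (T - s)) (𝓝[<] T) (𝓝 0) := by
    have := intervalIntegral.continuousOn_primitive_interval_left hint T right_mem_uIcc
    rw [ContinuousWithinAt, intervalIntegral.integral_same, uIcc_of_le hT.le] at this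
    exact this.mono_left (nhdsWithin_le_of_mem (Icc_mem_nhdsLT hT))
  have hlim := (hk_cont.tendsto.mono_left nhdsWithin_le_nhds).mul hprim
  rw [mul_zero] at hlim
  exact hlim.eventually_lt_const hk_pos

theorem integral_mul_comp_sub_le {r k : ℝ → ℝ} {M T U : ℝ} (hU : 0 ≤ U) (hUT : U ≤ T)
    (hrk_int : IntervalIntegrable (fun s => r s * k (T - s)) volume 0 T)
    (hk_int : IntervalIntegrable k volume 0 T) (hk_nonneg : ∀ t ∈ Ioi 0, 0 ≤ k t)
    (hr : ∀ s ∈ Ioo U T, r s ≤ M) :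
    ∫ s in U..T, r s * k (T - s) ≤ M * ∫ s in U..T, k (T - s) := by
  have hsub : uIcc U T ⊆ uIcc 0 T := by
    rw [uIcc_of_le hUT, uIcc_of_le (hU.trans hUT)]
    exact Icc_subset_Icc_left hU
  rw [← intervalIntegral.integral_const_mul]
  refine intervalIntegral.integral_mono_on_of_le_Ioo hUT (hrk_int.mono_set hsub)
    (((intervalIntegrable_comp_sub_self hk_int).mono_set hsub).const_mul M) fun s hs => ?_
  exact mul_le_mul_of_nonneg_right (hr s hs) (hk_nonneg _ (sub_pos.2 hs.2))

/-- `r` is the resolvent of the Volterra kernel `k` on `(0, ∞)`: it solves `r + r ∗ k = k`, where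
`∗` is the convolution over `[0, T]`. Integrability of the convolution integrand is part of the
notion, since the integral would be `0` without it. -/
structure IsVolterraResolvent (k r : ℝ → ℝ) : Prop where
  intervalIntegrable : ∀ T, 0 < T → IntervalIntegrable (fun s => r s * k (T - s)) volume 0 T
  eq_sub_integral : ∀ T, 0 < T → r T = k T - ∫ s in (0 : ℝ)..T, r s * k (T - s)

namespace IsVolterraResolvent

variable {k r : ℝ → ℝ}

theorem mul_le_mul_integral_of_nonpos (h : IsVolterraResolvent k r) (hk_pos : ∀ t ∈ Ioi 0, 0 < k t)
    (hk_conv : ConvexOn ℝ (Ioi 0) fun t => log (k t)) {T U : ℝ} (hU : 0 < U) (hUT : U ≤ T)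
    (hr_nonneg : ∀ s ∈ Ioo 0 T, 0 ≤ r s) (hrT : r T ≤ 0) :
    k T * r U ≤ k U * ∫ s in U..T, r s * k (T - s) := by
  have hT : 0 < T := hU.trans_le hUT
  have hintT₁ : IntervalIntegrable (fun s => r s * k (T - s)) volume 0 U :=
    (h.intervalIntegrable T hT).mono_set (by
      rw [uIcc_of_le hU.le, uIcc_of_le hT.le]; exact Icc_subset_Icc_right hUT)
  have hintT₂ : IntervalIntegrable (fun s => r s * k (T - s)) volume U T :=
    (h.intervalIntegrable T hT).mono_set (by
      rw [uIcc_of_le hUT, uIcc_of_le hT.le]; exact Icc_subset_Icc_left hU.le)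
  have hmono : ∫ s in (0 : ℝ)..U, k U * (r s * k (T - s)) ≤
      ∫ s in (0 : ℝ)..U, k T * (r s * k (U - s)) := by
    refine intervalIntegral.integral_mono_on_of_le_Ioo hU.le (hintT₁.const_mul _)
      ((h.intervalIntegrable U hU).const_mul _) fun s hs => ?_
    have hkk : k (T - s) * k U ≤ k (U - s) * k T :=
      mul_le_mul_of_convexOn_log hk_pos hk_conv (mem_Ioi.2 (sub_pos.2 hs.2)) hT
        (by linarith) (by linarith [hs.1]) (by ring)
    linear_combination mul_le_mul_of_nonneg_left hkk (hr_nonneg s ⟨hs.1, hs.2.trans_le hUT⟩)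
  simp only [intervalIntegral.integral_const_mul] at hmono
  have hkT : k T ≤ (∫ s in (0 : ℝ)..U, r s * k (T - s)) + ∫ s in U..T, r s * k (T - s) := by
    rw [intervalIntegral.integral_add_adjacent_intervals hintT₁ hintT₂]
    linarith [h.eq_sub_integral T hT]
  rw [h.eq_sub_integral U hU]
  linear_combination hmono + mul_le_mul_of_nonneg_left hkT (hk_pos U hU).le

/-- At a first zero `T` of `r`, `mul_le_mul_integral_of_nonpos` bounds `r U`, for `U < T`, by an
integral of `r` over `[U, T]` only. With `U` a maximizer of `r` on a short interval ending at `T`,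
this is impossible, because `∫ s in U..T, k (T - s)` tends to `0` as `U → T`. -/
theorem pos (h : IsVolterraResolvent k r) (hk_pos : ∀ t ∈ Ioi 0, 0 < k t)
    (hk_cont : ContinuousOn k (Ioi 0)) (hk_int : ∀ T, 0 < T → IntervalIntegrable k volume 0 T)
    (hk_conv : ConvexOn ℝ (Ioi 0) fun t => log (k t)) (hr_cont : ContinuousOn r (Ioi 0))
    (hr_pos : ∀ᶠ t in 𝓝[>] 0, 0 < r t) {t : ℝ} (ht : 0 < t) : 0 < r t := by
  by_contra! hrt
  obtain ⟨T, hT, hrT, hpos⟩ := exists_first_nonpos hr_cont hr_pos ht hrt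
  obtain ⟨V, hVT, hshort⟩ := mem_nhdsLT_iff_exists_Ico_subset.1 <|
    (eventually_mul_integral_comp_sub_lt hT (hk_pos T hT) (hk_cont.continuousAt (Ioi_mem_nhds hT))
      (hk_int T hT)).and (Ioo_mem_nhdsLT hT)
  have hV : V ∈ Ioo 0 T := (hshort ⟨le_rfl, hVT⟩).2
  have hsub : Icc V T ⊆ Ioi 0 := fun s hs => hV.1.trans_le hs.1
  obtain ⟨U, hU, hmax⟩ := isCompact_Icc.exists_isMaxOn (nonempty_Icc.2 hV.2.le) (hr_cont.mono hsub)
  have hrU : 0 < r U := (hpos V hV).trans_le (hmax (left_mem_Icc.2 hV.2.le))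
  have hUT : U < T := lt_of_le_of_ne hU.2 fun hUT => hrT.not_gt (hUT ▸ hrU)
  have hbound : ∫ s in U..T, r s * k (T - s) ≤ r U * ∫ s in U..T, k (T - s) :=
    integral_mul_comp_sub_le (hsub hU).le hUT.le (h.intervalIntegrable T hT) (hk_int T hT)
      (fun s hs => (hk_pos s hs).le) fun s hs => hmax ⟨hU.1.trans hs.1.le, hs.2.le⟩
  have hcontra : k T * r U < k T * r U :=
    calc k T * r U ≤ k U * ∫ s in U..T, r s * k (T - s) :=
          h.mul_le_mul_integral_of_nonpos hk_pos hk_conv (hsub hU) hUT.le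
            (fun s hs => (hpos s hs).le) hrT
      _ ≤ k U * (r U * ∫ s in U..T, k (T - s)) :=
          mul_le_mul_of_nonneg_left hbound (hk_pos U (hsub hU)).le
      _ = (k U * ∫ s in U..T, k (T - s)) * r U := by ring
      _ < k T * r U := mul_lt_mul_of_pos_right (hshort ⟨hU.1, hUT⟩).1 hrU
  exact hcontra.false

end IsVolterraResolvent

/-- The Riemann-Liouville kernel `t ^ (p - 1) / Γ(p)`, convolution with which is fractional
integration of order `p`. -/
noncomputable def rlKernel (p t : ℝ) : ℝ :=
  t ^ (p - 1) / Gamma p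

theorem rlKernel_pos {p t : ℝ} (hp : 0 < p) (ht : 0 < t) : 0 < rlKernel p t :=
  div_pos (rpow_pos_of_pos ht _) (Gamma_pos_of_pos hp)

theorem rlKernel_nonneg {p t : ℝ} (hp : 0 < p) (ht : 0 ≤ t) : 0 ≤ rlKernel p t :=
  div_nonneg (rpow_nonneg ht _) (Gamma_pos_of_pos hp).le

theorem rlKernel_one (t : ℝ) : rlKernel 1 t = 1 := by
  simp [rlKernel]

theorem continuousOn_rlKernel (p : ℝ) : ContinuousOn (rlKernel p) (Ioi 0) :=
  (continuousOn_id.rpow_const fun _ ht => Or.inl (ne_of_gt ht)).div_const _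

theorem intervalIntegrable_rlKernel {p : ℝ} (hp : 0 < p) (a b : ℝ) :
    IntervalIntegrable (rlKernel p) volume a b :=
  (intervalIntegral.intervalIntegrable_rpow' (by linarith)).div_const _

theorem convexOn_log_rlKernel {p : ℝ} (hp : 0 < p) (hp1 : p ≤ 1) :
    ConvexOn ℝ (Ioi 0) fun t => log (rlKernel p t) := by
  have hconv : ConvexOn ℝ (Ioi 0) fun t => (1 - p) • -log t + -log (Gamma p) :=
    (strictConcaveOn_log_Ioi.concaveOn.neg.smul (sub_nonneg.2 hp1)).add_const _
  refine hconv.congr fun t ht => ?_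
  simp only [smul_eq_mul]
  rw [rlKernel, log_div (rpow_pos_of_pos ht _).ne' (Gamma_pos_of_pos hp).ne', log_rpow ht]
  ring

theorem integral_rpow_mul_sub_rpow {p q T : ℝ} (hp : 0 < p) (hq : 0 < q) (hT : 0 < T) :
    ∫ s in (0 : ℝ)..T, s ^ (p - 1) * (T - s) ^ (q - 1) =
      T ^ (p + q - 1) * (Gamma p * Gamma q / Gamma (p + q)) := by
  have hscaled := Complex.betaIntegral_scaled (p : ℂ) q hT
  rw [Complex.betaIntegral_eq_Gamma_mul_div _ _ (by simpa) (by simpa)] at hscaled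
  apply Complex.ofReal_injective
  rw [← intervalIntegral.integral_ofReal]
  push_cast [Complex.ofReal_cpow hT.le, ← Complex.Gamma_ofReal]
  rw [← hscaled]
  refine intervalIntegral.integral_congr fun s hs => ?_
  rw [uIcc_of_le hT.le] at hs
  simp [Complex.ofReal_cpow hs.1, Complex.ofReal_cpow (sub_nonneg.2 hs.2)]

theorem integral_rlKernel_mul_rlKernel_sub {p q T : ℝ} (hp : 0 < p) (hq : 0 < q) (hT : 0 < T) :
    ∫ s in (0 : ℝ)..T, rlKernel p s * rlKernel q (T - s) = rlKernel (p + q) T := by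
  simp only [rlKernel, div_mul_div_comm]
  rw [intervalIntegral.integral_div, integral_rpow_mul_sub_rpow hp hq hT]
  field_simp

theorem intervalIntegrable_rlKernel_mul_rlKernel_sub {p q T : ℝ} (hp : 0 < p) (hq : 0 < q)
    (hT : 0 < T) :
    IntervalIntegrable (fun s => rlKernel p s * rlKernel q (T - s)) volume 0 T := by
  apply intervalIntegral.intervalIntegrable_of_integral_ne_zero
  rw [integral_rlKernel_mul_rlKernel_sub hp hq hT]
  exact (rlKernel_pos (add_pos hp hq) hT).ne'

theorem exp_neg_mul_rpow_le_Gamma {R p : ℝ} (hR : 0 ≤ R) (hp : 1 ≤ p) :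
    exp (-R) * R ^ (p - 1) ≤ Gamma p := by
  have hp0 : 0 < p := by linarith
  have hsub : Ioi R ⊆ Ioi (0 : ℝ) := Ioi_subset_Ioi hR
  have hint := GammaIntegral_convergent hp0
  calc exp (-R) * R ^ (p - 1) = ∫ s in Ioi R, exp (-s) * R ^ (p - 1) := by
        rw [integral_mul_const, integral_exp_neg_Ioi]
    _ ≤ ∫ s in Ioi R, exp (-s) * s ^ (p - 1) := by
        refine setIntegral_mono_on ((integrableOn_exp_neg_Ioi R).mul_const _)
          (hint.mono_set hsub) measurableSet_Ioi fun s (hs : R < s) => ?_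
        gcongr
    _ ≤ ∫ s in Ioi 0, exp (-s) * s ^ (p - 1) := by
        refine setIntegral_mono_set hint ?_ hsub.eventuallyLE
        filter_upwards [ae_restrict_mem measurableSet_Ioi] with s (hs : 0 < s)
        exact mul_nonneg (exp_nonneg _) (rpow_nonneg hs.le _)
    _ = Gamma p := (Gamma_eq_integral hp0).symm

/-- The two-parameter Mittag-Leffler function `E_{α,β}(r) = ∑ r^k / Γ(β+kα)`. -/
noncomputable def mittagLeffler₂ (α β r : ℝ) : ℝ :=
  ∑' k : ℕ, r ^ k / Gamma (β + k * α)

theorem mittagLeffler₂_one_right (α r : ℝ) : mittagLeffler₂ α 1 r = mittagLeffler α r :=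
  rfl

theorem mittagLeffler₂_zero (α β : ℝ) : mittagLeffler₂ α β 0 = (Gamma β)⁻¹ := by
  rw [mittagLeffler₂, tsum_eq_single 0 fun k hk => by simp [hk]]
  simp

theorem summable_pow_div_Gamma {α : ℝ} (hα : 0 < α) (β r : ℝ) :
    Summable fun k : ℕ => r ^ k / Gamma (β + k * α) := by
  obtain ⟨R, hR, hRα⟩ : ∃ R : ℝ, 0 < R ∧ R ^ α = |r| + 1 :=
    ⟨(|r| + 1) ^ α⁻¹, by positivity, rpow_inv_rpow (by positivity) hα.ne'⟩
  have hgeom : Summable fun k : ℕ => exp R * R ^ (1 - β) * (|r| / (|r| + 1)) ^ k :=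
    (summable_geometric_of_lt_one (by positivity)
      ((div_lt_one (by positivity)).2 (lt_add_one _))).mul_left _
  have hlarge : ∀ᶠ k : ℕ in atTop, 1 ≤ β + k * α :=
    (tendsto_atTop_add_const_left _ β
      (tendsto_natCast_atTop_atTop.atTop_mul_const hα)).eventually_ge_atTop 1
  refine hgeom.of_norm_bounded_eventually_nat ?_
  filter_upwards [hlarge] with k hk
  have hΓ := exp_neg_mul_rpow_le_Gamma hR.le hk
  have hpow : R ^ (β + k * α - 1) = (|r| + 1) ^ k / R ^ (1 - β) := by
    rw [← hRα, ← rpow_mul_natCast hR.le, ← rpow_sub hR]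
    ring_nf
  calc ‖r ^ k / Gamma (β + k * α)‖ = |r| ^ k / Gamma (β + k * α) := by
        rw [norm_div, norm_pow, norm_eq_abs, norm_of_nonneg (Gamma_pos_of_pos (by linarith)).le]
    _ ≤ |r| ^ k / (exp (-R) * R ^ (β + k * α - 1)) := by gcongr
    _ = exp R * R ^ (1 - β) * (|r| / (|r| + 1)) ^ k := by
        rw [hpow, exp_neg, div_pow]
        field_simp

theorem continuous_mittagLeffler₂ {α : ℝ} (hα : 0 < α) (β : ℝ) :
    Continuous (mittagLeffler₂ α β) := by
  refine continuous_iff_continuousAt.2 fun r => ?_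
  obtain ⟨R, hR⟩ := exists_gt |r|
  have hcont : ContinuousOn (mittagLeffler₂ α β) (Icc (-R) R) := by
    refine continuousOn_tsum (fun k => ((continuous_pow k).div_const _).continuousOn)
      (summable_pow_div_Gamma hα β R).norm fun k s hs => ?_
    have hsR : |s| ≤ |R| := (abs_le.2 hs).trans (le_abs_self R)
    simp only [norm_div, norm_pow, norm_eq_abs]
    gcongr
  exact hcont.continuousAt (Icc_mem_nhds (abs_lt.1 hR).1 (abs_lt.1 hR).2)

theorem continuous_mittagLeffler₂_neg_rpow {α : ℝ} (hα : 0 < α) (β : ℝ) :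
    Continuous fun t : ℝ => mittagLeffler₂ α β (-t ^ α) :=
  (continuous_mittagLeffler₂ hα β).comp (continuous_rpow_const hα.le).neg

/-- The function `t ^ (β - 1) * E_{α,β}(-t ^ α)` of fractional relaxation: it equals the alternating
series `∑ (-1) ^ k * rlKernel (β + k * α) t`, and for `β = 1` it is `E_α(-t ^ α)`. -/
noncomputable def relaxationKernel (α β t : ℝ) : ℝ :=
  t ^ (β - 1) * mittagLeffler₂ α β (-t ^ α)

section RelaxationKernel

variable {α β γ t T : ℝ}

theorem relaxationKernel_one_right (α t : ℝ) :
    relaxationKernel α 1 t = mittagLeffler α (-t ^ α) := by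
  rw [relaxationKernel, sub_self, rpow_zero, one_mul, mittagLeffler₂_one_right]

theorem rlKernel_add_natCast_mul (α β : ℝ) (ht : 0 < t) (k : ℕ) :
    rlKernel (β + k * α) t = t ^ (β - 1) * ((t ^ α) ^ k / Gamma (β + k * α)) := by
  rw [rlKernel, ← rpow_mul_natCast ht.le, show β + k * α - 1 = (β - 1) + α * k by ring,
    rpow_add ht, mul_div_assoc]

theorem summable_rlKernel (hα : 0 < α) (β : ℝ) (ht : 0 < t) :
    Summable fun k : ℕ => rlKernel (β + k * α) t := by
  simp only [rlKernel_add_natCast_mul α β ht]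
  exact (summable_pow_div_Gamma hα β _).mul_left _

theorem hasSum_relaxationKernel (hα : 0 < α) (β : ℝ) (ht : 0 < t) :
    HasSum (fun k : ℕ => (-1) ^ k * rlKernel (β + k * α) t) (relaxationKernel α β t) := by
  refine ((summable_pow_div_Gamma hα β (-t ^ α)).hasSum.mul_left (t ^ (β - 1))).congr_fun
    fun k => ?_
  rw [rlKernel_add_natCast_mul α β ht, neg_pow]
  ring

theorem relaxationKernel_eq_sub (hα : 0 < α) (β : ℝ) (ht : 0 < t) :
    relaxationKernel α β t = rlKernel β t - relaxationKernel α (β + α) t := by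
  have htail := (hasSum_nat_add_iff' 1).2 (hasSum_relaxationKernel hα β ht)
  have hshift : HasSum (fun k : ℕ => (-1) ^ (k + 1) * rlKernel (β + (k + 1 : ℕ) * α) t)
      (-relaxationKernel α (β + α) t) := by
    refine (hasSum_relaxationKernel hα (β + α) ht).neg.congr_fun fun k => ?_
    rw [show β + (k + 1 : ℕ) * α = β + α + k * α by push_cast; ring]
    ring
  have heq := htail.unique hshift
  simp only [Finset.sum_range_one, pow_zero, Nat.cast_zero, zero_mul, add_zero, one_mul] at heq
  linarith

theorem continuousOn_relaxationKernel (hα : 0 < α) (β : ℝ) :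
    ContinuousOn (relaxationKernel α β) (Ioi 0) :=
  (continuousOn_id.rpow_const fun _ ht => Or.inl (ne_of_gt ht)).mul
    (continuous_mittagLeffler₂_neg_rpow hα β).continuousOn

theorem eventually_relaxationKernel_pos (hα : 0 < α) (hβ : 0 < β) :
    ∀ᶠ t in 𝓝[>] 0, 0 < relaxationKernel α β t := by
  have hzero : 0 < mittagLeffler₂ α β (-0 ^ α) := by
    rw [zero_rpow hα.ne', neg_zero, mittagLeffler₂_zero]
    exact inv_pos.2 (Gamma_pos_of_pos hβ)
  have hnear := ((continuous_mittagLeffler₂_neg_rpow hα β).tendsto 0).eventually_const_lt hzero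
  filter_upwards [nhdsWithin_le_nhds hnear, self_mem_nhdsWithin] with t hE ht
  exact mul_pos (rpow_pos_of_pos ht _) hE

theorem intervalIntegrable_relaxationKernel_mul_rlKernel (hα : 0 < α) (hβ : 0 < β) (hγ : 0 < γ)
    (hT : 0 < T) :
    IntervalIntegrable (fun s => relaxationKernel α β s * rlKernel γ (T - s)) volume 0 T := by
  have hcont : Continuous fun s : ℝ => Gamma β * mittagLeffler₂ α β (-s ^ α) :=
    continuous_const.mul (continuous_mittagLeffler₂_neg_rpow hα β)
  refine ((intervalIntegrable_rlKernel_mul_rlKernel_sub hβ hγ hT).mul_continuousOn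
    hcont.continuousOn).congr fun s _ => ?_
  simp only [relaxationKernel, rlKernel]
  field_simp

theorem integral_relaxationKernel_mul_rlKernel (hα : 0 < α) (hβ : 0 < β) (hγ : 0 < γ)
    (hT : 0 < T) :
    ∫ s in (0 : ℝ)..T, relaxationKernel α β s * rlKernel γ (T - s) =
      relaxationKernel α (β + γ) T := by
  have hβk (k : ℕ) : 0 < β + k * α := by positivity
  have hterm (k : ℕ) : ∫ s in Ioc 0 T, rlKernel (β + k * α) s * rlKernel γ (T - s) =
      rlKernel (β + γ + k * α) T := by
    rw [← intervalIntegral.integral_of_le hT.le,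
      integral_rlKernel_mul_rlKernel_sub (hβk k) hγ hT, add_right_comm]
  have hnorm (k : ℕ) :
      ∫ s in Ioc 0 T, ‖(-1) ^ k * (rlKernel (β + k * α) s * rlKernel γ (T - s))‖ =
        rlKernel (β + γ + k * α) T := by
    rw [← hterm]
    refine setIntegral_congr_fun measurableSet_Ioc fun s hs => ?_
    have hs₀ := mul_nonneg (rlKernel_nonneg (hβk k) hs.1.le)
      (rlKernel_nonneg hγ (sub_nonneg.2 hs.2))
    simp only [norm_mul, norm_pow, norm_neg, norm_one, one_pow, one_mul]
    rw [← norm_mul, norm_of_nonneg hs₀]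
  have hint (k : ℕ) : IntegrableOn
      (fun s => (-1) ^ k * (rlKernel (β + k * α) s * rlKernel γ (T - s))) (Ioc 0 T) :=
    ((intervalIntegrable_iff_integrableOn_Ioc_of_le hT.le).1
      (intervalIntegrable_rlKernel_mul_rlKernel_sub (hβk k) hγ hT)).const_mul _
  have hsum := hasSum_integral_of_summable_integral_norm hint
    ((summable_rlKernel hα (β + γ) hT).congr fun k => (hnorm k).symm)
  simp only [integral_const_mul, hterm] at hsum
  rw [← hsum.unique (hasSum_relaxationKernel hα (β + γ) hT),
    intervalIntegral.integral_of_le hT.le]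
  refine setIntegral_congr_fun measurableSet_Ioc fun s hs => ?_
  rw [← (hasSum_relaxationKernel hα β hs.1).tsum_eq, ← tsum_mul_right]
  exact tsum_congr fun k => mul_assoc _ _ _

theorem isVolterraResolvent_relaxationKernel (hα : 0 < α) :
    IsVolterraResolvent (rlKernel α) (relaxationKernel α α) where
  intervalIntegrable _ hT := intervalIntegrable_relaxationKernel_mul_rlKernel hα hα hα hT
  eq_sub_integral T hT := by
    rw [integral_relaxationKernel_mul_rlKernel hα hα hα hT, relaxationKernel_eq_sub hα α hT]

theorem relaxationKernel_self_pos (hα : 0 < α) (hα1 : α ≤ 1) (ht : 0 < t) :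
    0 < relaxationKernel α α t :=
  (isVolterraResolvent_relaxationKernel hα).pos (fun _ => rlKernel_pos hα)
    (continuousOn_rlKernel α) (fun T _ => intervalIntegrable_rlKernel hα 0 T)
    (convexOn_log_rlKernel hα hα1) (continuousOn_relaxationKernel hα α)
    (eventually_relaxationKernel_pos hα hα) ht

theorem relaxationKernel_pos (hα : 0 < α) (hα1 : α ≤ 1) (hαβ : α ≤ β) (ht : 0 < t) :
    0 < relaxationKernel α β t := by
  obtain rfl | hlt := hαβ.eq_or_lt
  · exact relaxationKernel_self_pos hα hα1 ht
  rw [← add_sub_cancel α β,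
    ← integral_relaxationKernel_mul_rlKernel hα hα (sub_pos.2 hlt) ht]
  refine intervalIntegral.intervalIntegral_pos_of_pos_on
    (intervalIntegrable_relaxationKernel_mul_rlKernel hα hα (sub_pos.2 hlt) ht)
    (fun s hs => ?_) ht
  exact mul_pos (relaxationKernel_self_pos hα hα1 hs.1)
    (rlKernel_pos (sub_pos.2 hlt) (sub_pos.2 hs.2))

theorem monotoneOn_relaxationKernel_add_one (hα : 0 < α) (hα1 : α ≤ 1) (hαβ : α ≤ β) :
    MonotoneOn (relaxationKernel α (β + 1)) (Ioi 0) := by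
  have hβ : 0 < β := hα.trans_le hαβ
  have hint {T : ℝ} (hT : 0 < T) : IntervalIntegrable (relaxationKernel α β) volume 0 T := by
    simpa only [rlKernel_one, mul_one] using
      intervalIntegrable_relaxationKernel_mul_rlKernel hα hβ one_pos hT
  have hprim {T : ℝ} (hT : 0 < T) :
      relaxationKernel α (β + 1) T = ∫ s in (0 : ℝ)..T, relaxationKernel α β s := by
    simpa only [rlKernel_one, mul_one] using
      (integral_relaxationKernel_mul_rlKernel hα hβ one_pos hT).symm
  intro S hS T hT hST
  rw [hprim hS, hprim hT, ← sub_nonneg,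
    intervalIntegral.integral_interval_sub_left (hint hT) (hint hS)]
  exact intervalIntegral.integral_nonneg hST fun s hs =>
    (relaxationKernel_pos hα hα1 hαβ (lt_of_lt_of_le hS hs.1)).le

theorem antitoneOn_relaxationKernel_one (hα : 0 < α) (hα1 : α ≤ 1) :
    AntitoneOn (relaxationKernel α 1) (Ioi 0) := by
  intro S hS T hT hST
  rw [relaxationKernel_eq_sub hα 1 hS, relaxationKernel_eq_sub hα 1 hT, rlKernel_one,
    rlKernel_one, add_comm 1 α]
  exact sub_le_sub_left (monotoneOn_relaxationKernel_add_one hα hα1 le_rfl hS hT hST) 1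

theorem relaxationKernel_one_mul_rlKernel_le (hα : 0 < α) (hα1 : α ≤ 1) (hT : 0 < T) :
    relaxationKernel α 1 T * rlKernel (1 + α) T ≤ relaxationKernel α (1 + α) T := by
  rw [← integral_rlKernel_mul_rlKernel_sub one_pos hα hT,
    ← integral_relaxationKernel_mul_rlKernel hα one_pos hα hT,
    ← intervalIntegral.integral_const_mul]
  refine intervalIntegral.integral_mono_on_of_le_Ioo hT.le
    ((intervalIntegrable_rlKernel_mul_rlKernel_sub one_pos hα hT).const_mul _)
    (intervalIntegrable_relaxationKernel_mul_rlKernel hα one_pos hα hT) fun s hs => ?_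
  rw [rlKernel_one, one_mul]
  exact mul_le_mul_of_nonneg_right (antitoneOn_relaxationKernel_one hα hα1 hs.1 hT hs.2.le)
    (rlKernel_nonneg hα (sub_nonneg.2 hs.2.le))

end RelaxationKernel

theorem mittagLeffler_neg_pos {α r : ℝ} (hα : 0 < α) (hα1 : α ≤ 1) (hr : 0 < r) :
    0 < mittagLeffler α (-r) := by
  have hpos := relaxationKernel_pos hα hα1 hα1 (rpow_pos_of_pos hr α⁻¹)
  rwa [relaxationKernel_one_right, rpow_inv_rpow hr.le hα.ne'] at hpos

theorem mittagLeffler_neg_le {α r : ℝ} (hα : 0 < α) (hα1 : α ≤ 1) (hr : 0 < r) :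
    mittagLeffler α (-r) ≤ (1 + r / Gamma (1 + α))⁻¹ := by
  have hT : 0 < r ^ α⁻¹ := rpow_pos_of_pos hr α⁻¹
  have hle := relaxationKernel_one_mul_rlKernel_le hα hα1 hT
  have heq := relaxationKernel_eq_sub hα 1 hT
  rw [relaxationKernel_one_right, rpow_inv_rpow hr.le hα.ne'] at hle heq
  rw [rlKernel, add_sub_cancel_left, rpow_inv_rpow hr.le hα.ne'] at hle
  rw [rlKernel_one] at heq
  rw [← one_div, le_div_iff₀ (by positivity)]
  linarith

theorem tendsto_mittagLeffler_atBot {α : ℝ} (hα : 0 < α) (hα1 : α ≤ 1) :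
    Tendsto (mittagLeffler α) atBot (𝓝 0) := by
  have hΓ : 0 < Gamma (1 + α) := Gamma_pos_of_pos (by linarith)
  have hbound : Tendsto (fun r : ℝ => (1 + r / Gamma (1 + α))⁻¹) atTop (𝓝 0) :=
    (tendsto_atTop_add_const_left _ 1 (tendsto_id.atTop_div_const hΓ)).inv_tendsto_atTop
  have hneg : Tendsto (fun r => mittagLeffler α (-r)) atTop (𝓝 0) := by
    refine squeeze_zero' ?_ ?_ hbound
    · filter_upwards [eventually_gt_atTop 0] with r hr
      exact (mittagLeffler_neg_pos hα hα1 hr).le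
    · filter_upwards [eventually_gt_atTop 0] with r hr
      exact mittagLeffler_neg_le hα hα1 hr
  simpa only [Function.comp_def, neg_neg] using hneg.comp tendsto_neg_atBot_atTop

theorem tendsto_intervalIntegral_zero_of_tendsto_atTop {ι E : Type*} [NormedAddCommGroup E]
    [NormedSpace ℝ E] {l : Filter ι} {f : ℝ → E} {a b : ι → ℝ} {C : ℝ}
    (hf : Tendsto f atTop (𝓝 0)) (ha : Tendsto a l atTop)
    (hab : ∀ᶠ i in l, |b i - a i| ≤ C) :
    Tendsto (fun i => ∫ s in a i..b i, f s) l (𝓝 0) := by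
  rw [Metric.tendsto_nhds]
  intro ε hε
  obtain ⟨δ, hδ, hδε⟩ : ∃ δ > 0, δ * C < ε := by
    obtain ⟨δ, hδ, hlt⟩ := exists_pos_mul_lt hε C
    exact ⟨δ, hδ, by rwa [mul_comm]⟩
  obtain ⟨B, hB⟩ := eventually_atTop.1 (Metric.tendsto_nhds.1 hf δ hδ)
  filter_upwards [ha.eventually_ge_atTop (B + C), hab] with i hai habi
  have hB_le : B ≤ min (a i) (b i) :=
    le_min (by linarith [abs_nonneg (b i - a i)]) (by linarith [neg_abs_le (b i - a i)])
  have hsmall : ∀ s ∈ uIoc (a i) (b i), ‖f s‖ ≤ δ := fun s hs =>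
    (dist_zero_right (f s) ▸ hB s (hB_le.trans hs.1.le)).le
  calc dist (∫ s in a i..b i, f s) 0 = ‖∫ s in a i..b i, f s‖ := dist_zero_right _
    _ ≤ δ * |b i - a i| := intervalIntegral.norm_integral_le_of_norm_le_const hsmall
    _ ≤ δ * C := by gcongr
    _ < ε := hδε

theorem aCoeff_tendsto_zero (α t x : ℝ) (hα : 0 < α) (hα1 : α < 1) (ht : 0 < t)
    (hx : 0 < x) :
    Filter.Tendsto (fun k : ℕ => aCoeff α t x k) Filter.atTop (nhds 0) := by
  have hfactor : Tendsto (fun ξ : ℝ => mittagLeffler α ((1 - ξ ^ 2) * t ^ α)) atTop (𝓝 0) :=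
    (tendsto_mittagLeffler_atBot hα hα1.le).comp <|
      (tendsto_atBot_add_const_left _ 1 (tendsto_neg_atTop_atBot.comp
        (tendsto_pow_atTop two_ne_zero))).atBot_mul_const (rpow_pos_of_pos ht α)
  have hintegrand : Tendsto
      (fun ξ : ℝ => mittagLeffler α ((1 - ξ ^ 2) * t ^ α) * cos (x * ξ)) atTop (𝓝 0) :=
    hfactor.zero_mul_isBoundedUnder_le (isBoundedUnder_of ⟨1, fun ξ => abs_cos_le_one _⟩)
  have hendpoint : Tendsto (fun k : ℕ => π * (2 * (k : ℝ) - 1) / (2 * x)) atTop atTop :=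
    ((tendsto_atTop_add_const_right _ (-1) (tendsto_natCast_atTop_atTop.const_mul_atTop
      two_pos)).const_mul_atTop pi_pos).atTop_div_const (by positivity)
  have hlength (k : ℕ) :
      π * (2 * (k : ℝ) + 1) / (2 * x) - π * (2 * (k : ℝ) - 1) / (2 * x) = π / x := by
    field_simp
    ring
  have hintegral := tendsto_intervalIntegral_zero_of_tendsto_atTop hintegrand hendpoint
    (.of_forall fun k => (congrArg abs (hlength k)).le)
  have hsign : IsBoundedUnder (· ≤ ·) atTop (norm ∘ fun k : ℕ => (-1 : ℝ) ^ k) :=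
    isBoundedUnder_of ⟨1, fun k => by simp⟩
  refine (isBoundedUnder_le_mul_tendsto_zero hsign hintegral).congr' ?_
  filter_upwards [eventually_ne_atTop 0] with k hk
  rw [aCoeff, if_neg hk]
end

section
/- Let 0 < α < 1, let b > 0 and let 0 < β < 1/2. Then lim_{t→+∞} t^α · E_α(t^α(1 − b·t^{−2β})) / E_α(t^α) = 0. In particular, also E_α(t^α(1 − b·t^{−2β})) / E_α(t^α) → 0 as t → +∞. -/
open Real

/-! Put `s = 1 - b t ^ (-2β)` and `r = t ^ α`, and cut the series of `E_α(r s)` at an index `K`.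
A term of index `k ≥ K` is at most `s ^ K` times the corresponding term of `E_α(r)`. A term of
index `k ≤ K` is compared with the term of `E_α(r)` sitting `m` places later: log-convexity of `Γ`
bounds their ratio by `(1 + (K + m) α) ^ (m α) / r ^ m`. With `K = t ^ γ` and `2β < γ < 1`, the
first factor decays like `exp (-b t ^ (γ - 2β))` and the second like `t ^ (-m α (1 - γ))`, which
beats any given power of `t` once `m` is large. -/

open Filter MeasureTheory Set Topology

theorem Gamma_add_le_Gamma_mul_rpow {x y : ℝ} (hx : 0 < x) (hy : 0 ≤ y) :
    Gamma (x + y) ≤ Gamma x * (x + y) ^ y := by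
  rcases hy.eq_or_lt with rfl | hy
  · simp
  have hxy : 0 < x + y := by positivity
  have hslope : (log (Gamma (x + y)) - log (Gamma x)) / y ≤ log (x + y) := by
    have h := convexOn_log_Gamma.slope_mono_adjacent (mem_Ioi.2 hx)
      (mem_Ioi.2 (show 0 < x + y + 1 by positivity)) (lt_add_of_pos_right x hy) (lt_add_one _)
    simpa [Gamma_add_one hxy.ne', log_mul hxy.ne' (Gamma_pos_of_pos hxy).ne'] using h
  have hlog : log (Gamma (x + y)) ≤ log (Gamma x * (x + y) ^ y) := by
    rw [log_mul (Gamma_pos_of_pos hx).ne' (rpow_pos_of_pos hxy y).ne', log_rpow hxy]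
    linarith [(div_le_iff₀ hy).1 hslope]
  exact (log_le_log_iff (Gamma_pos_of_pos hxy)
    (mul_pos (Gamma_pos_of_pos hx) (rpow_pos_of_pos hxy y))).1 hlog

theorem exp_neg_mul_rpow_le_Gamma_one_add {R y : ℝ} (hR : 0 ≤ R) (hy : 0 ≤ y) :
    exp (-R) * R ^ y ≤ Gamma (1 + y) := by
  have hint : IntegrableOn (fun x : ℝ ↦ exp (-x) * x ^ y) (Ioi 0) := by
    simpa using GammaIntegral_convergent (show 0 < 1 + y by positivity)
  calc exp (-R) * R ^ y = ∫ x in Ioi R, exp (-x) * R ^ y := by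
        rw [integral_mul_const, integral_exp_neg_Ioi]
    _ ≤ ∫ x in Ioi R, exp (-x) * x ^ y := by
        refine setIntegral_mono_on ((integrableOn_exp_neg_Ioi R).mul_const _)
          (hint.mono_set (Ioi_subset_Ioi hR)) measurableSet_Ioi fun x hx ↦ ?_
        gcongr
        exact (mem_Ioi.1 hx).le
    _ ≤ ∫ x in Ioi 0, exp (-x) * x ^ y := by
        refine setIntegral_mono_set hint ?_ (Ioi_subset_Ioi hR).eventuallyLE
        filter_upwards [ae_restrict_mem measurableSet_Ioi] with x hx
        exact mul_nonneg (exp_pos _).le (rpow_nonneg (mem_Ioi.1 hx).le y)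
    _ = Gamma (1 + y) := by
        rw [Gamma_eq_integral (by positivity), add_sub_cancel_left]

/-- The `k`-th term of the series defining `mittagLeffler α r`. -/
noncomputable def mittagLefflerTerm (α r : ℝ) (k : ℕ) : ℝ :=
  r ^ k / Gamma (1 + k * α)

section MittagLeffler

variable {α r s K : ℝ}

theorem mittagLefflerTerm_nonneg (hα : 0 ≤ α) (hr : 0 ≤ r) (k : ℕ) :
    0 ≤ mittagLefflerTerm α r k :=
  div_nonneg (pow_nonneg hr k) (Gamma_pos_of_pos (by positivity)).le

theorem mittagLeffler_nonneg (hα : 0 ≤ α) (hr : 0 ≤ r) : 0 ≤ mittagLeffler α r :=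
  tsum_nonneg (mittagLefflerTerm_nonneg hα hr)

theorem mittagLefflerTerm_mul (α r s : ℝ) (k : ℕ) :
    mittagLefflerTerm α (r * s) k = s ^ k * mittagLefflerTerm α r k := by
  simp only [mittagLefflerTerm, mul_pow]
  ring

theorem summable_mittagLefflerTerm (hα : 0 < α) (r : ℝ) : Summable (mittagLefflerTerm α r) := by
  set q : ℝ := |r| + 1
  have hq : 0 < q := by positivity
  have hratio : |r| / q < 1 := (div_lt_one hq).2 (lt_add_one _)
  -- `R` is chosen so that `R ^ (k * α) = q ^ k`.
  set R : ℝ := q ^ α⁻¹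
  have hΓ (k : ℕ) : exp (-R) * q ^ k ≤ Gamma (1 + k * α) := by
    have h := exp_neg_mul_rpow_le_Gamma_one_add (R := R) (y := k * α) (by positivity)
      (by positivity)
    rwa [← rpow_mul hq.le, mul_left_comm, inv_mul_cancel₀ hα.ne', mul_one, rpow_natCast] at h
  refine .of_norm_bounded
    ((summable_geometric_of_lt_one (by positivity) hratio).mul_left (exp R)) fun k ↦ ?_
  calc ‖mittagLefflerTerm α r k‖ = |r| ^ k / Gamma (1 + k * α) := by
        rw [mittagLefflerTerm, norm_div, norm_pow, norm_eq_abs,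
          norm_of_nonneg (Gamma_pos_of_pos (by positivity)).le]
    _ ≤ |r| ^ k / (exp (-R) * q ^ k) := by gcongr; exact hΓ k
    _ = exp R * (|r| / q) ^ k := by rw [exp_neg, div_pow]; field_simp

theorem mittagLefflerTerm_le_mul_add (hα : 0 ≤ α) (hr : 0 < r) (m : ℕ) {k : ℕ} (hk : k ≤ K) :
    mittagLefflerTerm α r k ≤
      (1 + (K + m) * α) ^ (m * α) / r ^ m * mittagLefflerTerm α r (k + m) := by
  have hΓ : Gamma (1 + (k + m : ℕ) * α) ≤ Gamma (1 + k * α) * (1 + (K + m) * α) ^ (m * α) :=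
    calc Gamma (1 + (k + m : ℕ) * α) = Gamma (1 + k * α + m * α) := by push_cast; ring_nf
      _ ≤ Gamma (1 + k * α) * (1 + k * α + m * α) ^ (m * α) :=
          Gamma_add_le_Gamma_mul_rpow (by positivity) (by positivity)
      _ = Gamma (1 + k * α) * (1 + (k + m) * α) ^ (m * α) := by ring_nf
      _ ≤ Gamma (1 + k * α) * (1 + (K + m) * α) ^ (m * α) := by gcongr
  calc mittagLefflerTerm α r k
      = r ^ k / (Gamma (1 + k * α) * Gamma (1 + (k + m : ℕ) * α)) *
          Gamma (1 + (k + m : ℕ) * α) := by rw [mittagLefflerTerm]; field_simp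
    _ ≤ r ^ k / (Gamma (1 + k * α) * Gamma (1 + (k + m : ℕ) * α)) *
          (Gamma (1 + k * α) * (1 + (K + m) * α) ^ (m * α)) := by gcongr
    _ = (1 + (K + m) * α) ^ (m * α) / r ^ m * mittagLefflerTerm α r (k + m) := by
        rw [mittagLefflerTerm, pow_add]; field_simp

theorem mittagLefflerTerm_mul_le (hα : 0 ≤ α) (hr : 0 < r) (hs : 0 ≤ s) (hs1 : s ≤ 1)
    (hK : 0 ≤ K) (m k : ℕ) :
    mittagLefflerTerm α (r * s) k ≤ s ^ K * mittagLefflerTerm α r k +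
      (1 + (K + m) * α) ^ (m * α) / r ^ m * mittagLefflerTerm α r (k + m) := by
  have hterm := mittagLefflerTerm_nonneg hα hr.le
  have hterm_shift := hterm (k + m)
  rw [mittagLefflerTerm_mul]
  rcases le_total K k with hKk | hkK
  · have hpow : s ^ k ≤ s ^ K := by
      simpa using rpow_le_rpow_of_exponent_ge' hs hs1 hK hKk
    exact (mul_le_mul_of_nonneg_right hpow (hterm k)).trans
      (le_add_of_nonneg_right (by positivity))
  · calc s ^ k * mittagLefflerTerm α r k ≤ mittagLefflerTerm α r k :=
          mul_le_of_le_one_left (hterm k) (pow_le_one₀ hs hs1)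
      _ ≤ (1 + (K + m) * α) ^ (m * α) / r ^ m * mittagLefflerTerm α r (k + m) :=
          mittagLefflerTerm_le_mul_add hα hr m hkK
      _ ≤ _ := le_add_of_nonneg_left (mul_nonneg (rpow_nonneg hs K) (hterm k))

theorem mittagLeffler_mul_le (hα : 0 < α) (hr : 0 < r) (hs : 0 ≤ s) (hs1 : s ≤ 1)
    (hK : 0 ≤ K) (m : ℕ) :
    mittagLeffler α (r * s) ≤
      (s ^ K + (1 + (K + m) * α) ^ (m * α) / r ^ m) * mittagLeffler α r := by
  set C : ℝ := (1 + (K + m) * α) ^ (m * α) / r ^ m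
  have hsum := summable_mittagLefflerTerm hα r
  have hsum_shift : Summable fun k ↦ mittagLefflerTerm α r (k + m) :=
    (summable_nat_add_iff m).2 hsum
  have hshift : ∑' k, mittagLefflerTerm α r (k + m) ≤ mittagLeffler α r :=
    tsum_comp_le_tsum_of_inj hsum (mittagLefflerTerm_nonneg hα.le hr.le) (add_left_injective m)
  calc mittagLeffler α (r * s)
      ≤ ∑' k, (s ^ K * mittagLefflerTerm α r k + C * mittagLefflerTerm α r (k + m)) :=
        (summable_mittagLefflerTerm hα (r * s)).tsum_le_tsum
          (mittagLefflerTerm_mul_le hα.le hr hs hs1 hK m)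
          ((hsum.mul_left _).add (hsum_shift.mul_left _))
    _ = s ^ K * mittagLeffler α r + C * ∑' k, mittagLefflerTerm α r (k + m) := by
        rw [(hsum.mul_left _).tsum_add (hsum_shift.mul_left _), tsum_mul_left, tsum_mul_left]
        rfl
    _ ≤ s ^ K * mittagLeffler α r + C * mittagLeffler α r := by gcongr
    _ = (s ^ K + C) * mittagLeffler α r := by ring

end MittagLeffler

section Rates

variable {b γ δ : ℝ}

theorem eventually_one_sub_mul_rpow_neg_mem_Icc (hb : 0 ≤ b) (hδ : 0 < δ) :
    ∀ᶠ t : ℝ in atTop, 1 - b * t ^ (-δ) ∈ Icc 0 1 := by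
  have h : Tendsto (fun t : ℝ ↦ b * t ^ (-δ)) atTop (𝓝 0) := by
    simpa using (tendsto_rpow_neg_atTop hδ).const_mul b
  filter_upwards [h.eventually_le_const one_pos, eventually_ge_atTop 0] with t hle ht
  exact ⟨sub_nonneg.2 hle, sub_le_self _ (by positivity)⟩

theorem tendsto_rpow_mul_exp_neg_mul_rpow (p : ℝ) (hb : 0 < b) (hγ : 0 < γ) :
    Tendsto (fun t : ℝ ↦ t ^ p * exp (-(b * t ^ γ))) atTop (𝓝 0) := by
  refine ((tendsto_rpow_mul_exp_neg_mul_atTop_nhds_zero (p / γ) b hb).comp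
    (tendsto_rpow_atTop hγ)).congr' ?_
  filter_upwards [eventually_ge_atTop 0] with t ht
  simp only [Function.comp_apply]
  rw [← rpow_mul ht, mul_div_cancel₀ _ hγ.ne', neg_mul]

theorem tendsto_rpow_mul_one_sub_mul_rpow_neg_rpow (p : ℝ) (hb : 0 < b) (hδ : 0 < δ)
    (hδγ : δ < γ) :
    Tendsto (fun t : ℝ ↦ t ^ p * (1 - b * t ^ (-δ)) ^ t ^ γ) atTop (𝓝 0) := by
  refine squeeze_zero' ?_ ?_ (tendsto_rpow_mul_exp_neg_mul_rpow p hb (sub_pos.2 hδγ))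
  all_goals
    filter_upwards [eventually_one_sub_mul_rpow_neg_mem_Icc hb.le hδ, eventually_gt_atTop 0]
      with t ⟨hs, _⟩ ht
  · positivity
  · gcongr
    calc (1 - b * t ^ (-δ)) ^ t ^ γ ≤ exp (-(b * t ^ (-δ))) ^ t ^ γ := by
          gcongr
          exact one_sub_le_exp_neg _
      _ = exp (-(b * t ^ (γ - δ))) := by
          rw [← exp_mul, sub_eq_neg_add, rpow_add ht]
          ring_nf

theorem tendsto_add_mul_rpow_rpow_mul_rpow_neg {a c q u : ℝ} (ha : 0 ≤ a) (hc : 0 ≤ c)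
    (hγ : 0 ≤ γ) (hq : 0 ≤ q) (hu : γ * q < u) :
    Tendsto (fun t : ℝ ↦ (a + c * t ^ γ) ^ q * t ^ (-u)) atTop (𝓝 0) := by
  have hlim : Tendsto (fun t : ℝ ↦ (a + c) ^ q * t ^ (-(u - γ * q))) atTop (𝓝 0) := by
    simpa using (tendsto_rpow_neg_atTop (sub_pos.2 hu)).const_mul ((a + c) ^ q)
  refine squeeze_zero' ?_ ?_ hlim
  all_goals filter_upwards [eventually_ge_atTop 1] with t ht
  · positivity
  · have ht0 : 0 < t := by positivity
    have hbase : a + c * t ^ γ ≤ (a + c) * t ^ γ := by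
      linarith [le_mul_of_one_le_right ha (one_le_rpow ht hγ)]
    calc (a + c * t ^ γ) ^ q * t ^ (-u) ≤ ((a + c) * t ^ γ) ^ q * t ^ (-u) := by gcongr
      _ = (a + c) ^ q * (t ^ (γ * q) * t ^ (-u)) := by
          rw [mul_rpow (by positivity) (by positivity), ← rpow_mul ht0.le, mul_assoc]
      _ = (a + c) ^ q * t ^ (-(u - γ * q)) := by
          rw [← rpow_add ht0]
          ring_nf

theorem tendsto_rpow_mul_one_add_rpow_div_pow {α p : ℝ} {m : ℕ} (hα : 0 ≤ α) (hγ : 0 ≤ γ)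
    (hp : p < m * (α * (1 - γ))) :
    Tendsto (fun t : ℝ ↦ t ^ p * ((1 + (t ^ γ + m) * α) ^ (m * α) / (t ^ α) ^ m)) atTop (𝓝 0) := by
  have hu : γ * (m * α) < m * α - p := by linarith
  refine (tendsto_add_mul_rpow_rpow_mul_rpow_neg (a := 1 + m * α) (by positivity) hα hγ
    (by positivity) hu).congr' ?_
  filter_upwards [eventually_gt_atTop 0] with t ht
  rw [← rpow_mul_natCast ht.le, neg_sub, rpow_sub ht]
  ring_nf

end Rates

theorem mittagLeffler_ratio_tendsto_zero_general (p : ℝ) {α b δ : ℝ} (hα : 0 < α) (hb : 0 < b)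
    (hδ : 0 < δ) (hδ1 : δ < 1) :
    Tendsto (fun t : ℝ ↦ t ^ p * mittagLeffler α (t ^ α * (1 - b * t ^ (-δ))) /
      mittagLeffler α (t ^ α)) atTop (𝓝 0) := by
  obtain ⟨γ, hδγ, hγ1⟩ := exists_between hδ1
  obtain ⟨m, hm⟩ := exists_nat_gt (p / (α * (1 - γ)))
  have hp : p < m * (α * (1 - γ)) := (div_lt_iff₀ (mul_pos hα (sub_pos.2 hγ1))).1 hm
  have hlim := (tendsto_rpow_mul_one_sub_mul_rpow_neg_rpow p hb hδ hδγ).add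
    (tendsto_rpow_mul_one_add_rpow_div_pow hα.le (hδ.trans hδγ).le hp)
  rw [add_zero] at hlim
  refine squeeze_zero' ?_ ?_ hlim
  all_goals
    filter_upwards [eventually_one_sub_mul_rpow_neg_mem_Icc hb.le hδ, eventually_gt_atTop 0]
      with t ⟨hs, hs1⟩ ht
    have hr : 0 < t ^ α := rpow_pos_of_pos ht α
    have hE := mittagLeffler_nonneg hα.le hr.le
  · have := mittagLeffler_nonneg hα.le (mul_nonneg hr.le hs)
    positivity
  · rw [← mul_add]
    refine div_le_of_le_mul₀ hE (by positivity) ?_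
    rw [mul_assoc]
    gcongr
    exact mittagLeffler_mul_le hα hr hs hs1 (rpow_nonneg ht.le γ) m

theorem mittagLeffler_ratio_tendsto_zero (α b β : ℝ) (hα : 0 < α) (hα1 : α < 1)
    (hb : 0 < b) (hβ : 0 < β) (hβ' : β < 1 / 2) :
    Filter.Tendsto
      (fun t : ℝ => t ^ α * mittagLeffler α (t ^ α * (1 - b * t ^ (-(2 * β)))) /
        mittagLeffler α (t ^ α))
      Filter.atTop (nhds 0) ∧
    Filter.Tendsto
      (fun t : ℝ => mittagLeffler α (t ^ α * (1 - b * t ^ (-(2 * β)))) /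
        mittagLeffler α (t ^ α))
      Filter.atTop (nhds 0) := by
  have hlim (p : ℝ) := mittagLeffler_ratio_tendsto_zero_general p hα hb
    (show 0 < 2 * β by linarith) (by linarith)
  exact ⟨hlim α, by simpa using hlim 0⟩
end
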